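/- In the randomized controlled trial model with responses, for every attribute a : N → {0,1} with |a| > 0 and every position k ∈ {1,…,s}, the conditional effect of treatment given A_k = 1 satisfies: Pr(R_k = 1 | (T_k = 1) ∩ (A_k = 1)) − Pr(R_k = 1 | (T_k = 0) ∩ (A_k = 1)) = (1/|a|)·Σ_{i : a(i)=1} (τ_i − ν_i), where A_k = a(i_k) and |a| = #{i : a(i)=1}. -/

import Mathlib

/- Randomized controlled trial model with responses:
   a uniformly random injective s-tuple of individuals from `Fin n`
   (encoded as `Fin s ↪ Fin n`), an independent uniformly random t-element
   subset of positions `Fin s` (the treated positions), and, given these,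
   independent Bernoulli responses at each position: position `k` responds
   with probability `τ (i_k)` if treated and `ν (i_k)` if untreated. -/

open Finset BigOperators
open scoped Classical

namespace RCT

/-- Probability weight of a sample point `(σ, T, R)`. -/
noncomputable def w (n s t : ℕ) (τ ν : Fin n → ℝ)
    (ω : (Fin s ↪ Fin n) × Finset (Fin s) × (Fin s → Bool)) : ℝ :=
  ((Fintype.card (Fin s ↪ Fin n) : ℝ))⁻¹ *
    (if ω.2.1.card = t then ((s.choose t : ℝ))⁻¹ else 0) *
    ∏ k : Fin s,
      (if ω.2.2 k = true
        then (if k ∈ ω.2.1 then τ (ω.1 k) else ν (ω.1 k))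
        else 1 - (if k ∈ ω.2.1 then τ (ω.1 k) else ν (ω.1 k)))

/-- Probability of an event. -/
noncomputable def Pr (n s t : ℕ) (τ ν : Fin n → ℝ)
    (E : (Fin s ↪ Fin n) × Finset (Fin s) × (Fin s → Bool) → Prop) : ℝ :=
  ∑ ω : (Fin s ↪ Fin n) × Finset (Fin s) × (Fin s → Bool),
    if E ω then w n s t τ ν ω else 0

/-- Conditional probability `Pr (E | F)`. -/
noncomputable def cPr (n s t : ℕ) (τ ν : Fin n → ℝ)
    (E F : (Fin s ↪ Fin n) × Finset (Fin s) × (Fin s → Bool) → Prop) : ℝ :=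
  Pr n s t τ ν (fun ω => E ω ∧ F ω) / Pr n s t τ ν F

/-- Expectation of a real-valued random variable. -/
noncomputable def Ex (n s t : ℕ) (τ ν : Fin n → ℝ)
    (f : (Fin s ↪ Fin n) × Finset (Fin s) × (Fin s → Bool) → ℝ) : ℝ :=
  ∑ ω : (Fin s ↪ Fin n) × Finset (Fin s) × (Fin s → Bool), w n s t τ ν ω * f ω

theorem sum_resp {s : ℕ} (p : Fin s → ℝ) :
    ∑ R : Fin s → Bool, ∏ j, (if R j = true then p j else 1 - p j) = 1 := by
  have h := Finset.prod_univ_sum (fun _ : Fin s => (univ : Finset Bool))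
    (fun j b => if b = true then p j else 1 - p j)
  rw [Fintype.piFinset_univ] at h
  rw [← h]
  simp

theorem sum_resp_k {s : ℕ} (p : Fin s → ℝ) (k : Fin s) :
    ∑ R : Fin s → Bool, (if R k = true then
      ∏ j, (if R j = true then p j else 1 - p j) else 0) = p k := by
  have h := Finset.prod_univ_sum (fun _ : Fin s => (univ : Finset Bool))
    (fun j b => if b = true then p j else if j = k then 0 else 1 - p j)
  rw [Fintype.piFinset_univ] at h
  have h2 : ∀ R : Fin s → Bool, (if R k = true then
      ∏ j, (if R j = true then p j else 1 - p j) else 0) =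
      ∏ j, (if R j = true then p j else if j = k then 0 else 1 - p j) := by
    intro R
    split_ifs with hR
    · refine Finset.prod_congr rfl fun j _ => ?_
      by_cases hj : j = k
      · subst hj; simp [hR]
      · simp [hj]
    · symm
      apply Finset.prod_eq_zero (Finset.mem_univ k)
      simp [hR]
  rw [Finset.sum_congr rfl (fun R _ => h2 R), ← h]
  rw [Finset.prod_eq_single k]
  · simp
  · intro j _ hj
    simp [hj]
  · simp

theorem sum_emb {n s : ℕ} (hsn : s ≤ n) (k : Fin s) :
    ∃ C : ℝ, 0 < C ∧ ∀ g : Fin n → ℝ, ∑ σ : Fin s ↪ Fin n, g (σ k) = C * ∑ i, g i := by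
  have hn : 0 < n := lt_of_lt_of_le k.pos hsn
  let i0 : Fin n := Fin.castLE hsn k
  let c : Fin n → ℕ := fun i => (univ.filter (fun σ : Fin s ↪ Fin n => σ k = i)).card
  have hc : ∀ i, c i = c i0 := by
    intro i
    refine Finset.card_bij' (fun σ _ => σ.trans (Equiv.swap i i0).toEmbedding)
      (fun σ _ => σ.trans (Equiv.swap i i0).toEmbedding) ?_ ?_ ?_ ?_
    · intro σ hσ
      simp at hσ
      simp [hσ]
    · intro σ hσ
      simp at hσ
      simp [hσ]
    · intro σ hσ
      ext j
      simp
    · intro σ hσ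
      ext j
      simp
  refine ⟨c i0, ?_, ?_⟩
  · have : 0 < c i0 := Finset.card_pos.2 ⟨Fin.castLEEmb hsn, by simp [i0]⟩
    exact_mod_cast this
  · intro g
    rw [← Finset.sum_fiberwise univ (fun σ : Fin s ↪ Fin n => σ k), Finset.mul_sum]
    refine Finset.sum_congr rfl fun i _ => ?_
    rw [← hc i, Finset.sum_congr rfl (g := fun _ => g i)]
    · simp [c]
    · intro σ hσ
      simp at hσ
      rw [hσ]

theorem Pr_gen (n s t : ℕ) (τ ν : Fin n → ℝ) (C : ℝ) (k : Fin s)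
    (hC : ∀ g : Fin n → ℝ, ∑ σ : Fin s ↪ Fin n, g (σ k) = C * ∑ i, g i)
    (a : Fin n → Fin 2) (q : Fin n → ℝ) (P : Finset (Fin s) → Prop)
    (E : (Fin s → Bool) → Prop)
    (hE : ∀ (σ : Fin s ↪ Fin n) (T : Finset (Fin s)), P T →
      ∑ R : Fin s → Bool, (if E R then
      ∏ j, (if R j = true then (if j ∈ T then τ (σ j) else ν (σ j))
        else 1 - (if j ∈ T then τ (σ j) else ν (σ j))) else 0) = q (σ k)) :
    Pr n s t τ ν (fun ω => E ω.2.2 ∧ P ω.2.1 ∧ a (ω.1 k) = 1) =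
      ((Fintype.card (Fin s ↪ Fin n) : ℝ))⁻¹ * ((s.choose t : ℝ))⁻¹ *
      ((univ.filter (fun T : Finset (Fin s) => T.card = t ∧ P T)).card : ℝ) * C *
      ∑ i ∈ univ.filter (fun i => a i = 1), q i := by
  unfold Pr w
  rw [Fintype.sum_prod_type]
  have key : ∀ σ : Fin s ↪ Fin n, ∀ T : Finset (Fin s), ∑ R : Fin s → Bool,
      (if E R ∧ P T ∧ a (σ k) = 1 then
        ((Fintype.card (Fin s ↪ Fin n) : ℝ))⁻¹ *
        (if T.card = t then ((s.choose t : ℝ))⁻¹ else 0) *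
        ∏ j, (if R j = true then (if j ∈ T then τ (σ j) else ν (σ j))
        else 1 - (if j ∈ T then τ (σ j) else ν (σ j))) else 0) =
      (if T.card = t ∧ P T then ((Fintype.card (Fin s ↪ Fin n) : ℝ))⁻¹ * ((s.choose t : ℝ))⁻¹
        else 0) * (if a (σ k) = 1 then q (σ k) else 0) := by
    intro σ T
    by_cases hP : P T
    · by_cases hA : a (σ k) = 1
      · by_cases hT : T.card = t
        · simp only [hP, hA, hT, and_self, and_true, if_true]
          rw [← hE σ T hP, Finset.mul_sum]
          refine Finset.sum_congr rfl fun R _ => ?_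
          split_ifs <;> simp
        · simp [hT]
      · simp [hA]
    · simp [hP]
  have h2 : ∀ σ : Fin s ↪ Fin n, ∑ y : Finset (Fin s) × (Fin s → Bool),
      (if E y.2 ∧ P y.1 ∧ a (σ k) = 1 then
        ((Fintype.card (Fin s ↪ Fin n) : ℝ))⁻¹ *
        (if y.1.card = t then ((s.choose t : ℝ))⁻¹ else 0) *
        ∏ j, (if y.2 j = true then (if j ∈ y.1 then τ (σ j) else ν (σ j))
        else 1 - (if j ∈ y.1 then τ (σ j) else ν (σ j))) else 0) =
      (∑ T : Finset (Fin s), (if T.card = t ∧ P T then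
        ((Fintype.card (Fin s ↪ Fin n) : ℝ))⁻¹ * ((s.choose t : ℝ))⁻¹
        else 0)) * (if a (σ k) = 1 then q (σ k) else 0) := by
    intro σ
    rw [Fintype.sum_prod_type, Finset.sum_mul]
    exact Finset.sum_congr rfl fun T _ => key σ T
  refine (Finset.sum_congr rfl fun σ _ => Eq.trans (by
    refine Finset.sum_congr rfl fun y _ => ?_
    congr) (h2 σ)).trans ?_
  rw [← Finset.mul_sum, hC (fun i => if a i = 1 then q i else 0), ← Finset.sum_filter,
    ← Finset.sum_filter, Finset.sum_const, nsmul_eq_mul]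
  ring

theorem cPr_gen (n s t : ℕ) (hts : t < s) (hsn : s ≤ n) (τ ν : Fin n → ℝ) (k : Fin s)
    (a : Fin n → Fin 2) (q : Fin n → ℝ) (P : Finset (Fin s) → Prop)
    (ha : 0 < (univ.filter (fun i => a i = 1)).card)
    (hP : ∃ T : Finset (Fin s), T.card = t ∧ P T)
    (hq : ∀ (σ : Fin s ↪ Fin n) (T : Finset (Fin s)), P T →
      (if k ∈ T then τ (σ k) else ν (σ k)) = q (σ k)) :
    cPr n s t τ ν (fun ω => ω.2.2 k = true) (fun ω => P ω.2.1 ∧ a (ω.1 k) = 1) =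
      (1 / ((univ.filter (fun i => a i = 1)).card : ℝ)) *
        ∑ i ∈ univ.filter (fun i => a i = 1), q i := by
  obtain ⟨C, hC0, hC⟩ := sum_emb hsn k
  have h1 := Pr_gen n s t τ ν C k hC a q P (fun R => R k = true) (by
    intro σ T hT
    rw [← hq σ T hT]
    convert sum_resp_k (fun j => if j ∈ T then τ (σ j) else ν (σ j)) k)
  have h2 := Pr_gen n s t τ ν C k hC a (fun _ => 1) P (fun _ => True) (by
    intro σ T hT
    simp only [if_true]
    exact sum_resp (fun j => if j ∈ T then τ (σ j) else ν (σ j)))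
  simp only [true_and] at h2
  unfold cPr
  rw [h1, h2]
  have e1 : ((Fintype.card (Fin s ↪ Fin n) : ℝ)) ≠ 0 := by
    have : 0 < Fintype.card (Fin s ↪ Fin n) := Fintype.card_pos_iff.2 ⟨Fin.castLEEmb hsn⟩
    exact_mod_cast this.ne'
  have e2 : (s.choose t : ℝ) ≠ 0 := by
    exact_mod_cast (Nat.choose_pos hts.le).ne'
  have e3 : ((univ.filter (fun T : Finset (Fin s) => T.card = t ∧ P T)).card : ℝ) ≠ 0 := by
    obtain ⟨T, hT⟩ := hP
    have : 0 < (univ.filter (fun T : Finset (Fin s) => T.card = t ∧ P T)).card :=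
      Finset.card_pos.2 ⟨T, by simpa using hT⟩
    exact_mod_cast this.ne'
  have e4 : ((univ.filter (fun i => a i = 1)).card : ℝ) ≠ 0 := by exact_mod_cast ha.ne'
  have e5 := hC0.ne'
  rw [Finset.sum_const, nsmul_eq_mul, mul_one]
  rw [mul_div_mul_left]
  · ring
  · exact mul_ne_zero (mul_ne_zero (mul_ne_zero (inv_ne_zero e1) (inv_ne_zero e2)) e3) e5

/-- Conditional effect of treatment given `A_k = 1`:
`Pr(R_k = 1 | (T_k = 1) ∩ (A_k = 1)) − Pr(R_k = 1 | (T_k = 0) ∩ (A_k = 1))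
  = (1/|a|)·Σ_{i : a i = 1} (τ i − ν i)`. -/
theorem conditional_effect_attribute_one (n s t : ℕ) (ht : 0 < t) (hts : t < s) (hsn : s ≤ n)
    (τ ν : Fin n → ℝ) (hτ : ∀ i, τ i ∈ Set.Icc (0 : ℝ) 1) (hν : ∀ i, ν i ∈ Set.Icc (0 : ℝ) 1)
    (a : Fin n → Fin 2) (ha : 0 < (univ.filter (fun i => a i = 1)).card) (k : Fin s) :
    cPr n s t τ ν (fun ω => ω.2.2 k = true) (fun ω => k ∈ ω.2.1 ∧ a (ω.1 k) = 1) -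
      cPr n s t τ ν (fun ω => ω.2.2 k = true) (fun ω => k ∉ ω.2.1 ∧ a (ω.1 k) = 1) =
      (1 / ((univ.filter (fun i => a i = 1)).card : ℝ)) *
        ∑ i ∈ univ.filter (fun i => a i = 1), (τ i - ν i) := by
  rw [cPr_gen n s t hts hsn τ ν k a τ (fun T => k ∈ T) ha ?_ ?_,
    cPr_gen n s t hts hsn τ ν k a ν (fun T => k ∉ T) ha ?_ ?_, ← mul_sub,
    Finset.sum_sub_distrib]
  · obtain ⟨T, hT, hc⟩ := Finset.exists_subset_card_eq
      (s := (univ : Finset (Fin s)).erase k) (n := t) (by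
        rw [Finset.card_erase_of_mem (Finset.mem_univ k)]; simp; omega)
    exact ⟨T, hc, fun h => by simpa using hT h⟩
  · intro σ T hT
    simp only [if_neg hT]
  · obtain ⟨T, hT, -, hc⟩ := Finset.exists_subsuperset_card_eq
      (Finset.subset_univ {k}) (n := t) (by rw [Finset.card_singleton]; omega) (by simpa using hts.le)
    exact ⟨T, hc, by simpa using hT⟩
  · intro σ T hT
    simp only [if_pos hT]

end RCT
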